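/- arXiv:1911.06225 — 2 statements merged into one kernel-verified Lean document; each statement's English description precedes it below -/
import Mathlib

section
/- Let X₁, …, Xₙ be real numbers that are not all equal, and let (θ̂ₙ, ψ̂ₙ) be a maximizer of Ψₙ over ℝ × SC₀. Then the second moment of the density ĝₙ = e^{ψ̂ₙ} is bounded by the empirical second moment about θ̂ₙ: ∫_ℝ x² e^{ψ̂ₙ(x)} dx ≤ (1/n) Σᵢ (Xᵢ − θ̂ₙ)². -/
open MeasureTheory Filter Set
open scoped ENNReal NNReal

noncomputable section

/-- `exp` of an extended real number, valued in `ℝ≥0∞`. -/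
def expE (y : EReal) : ℝ≥0∞ :=
  if y = ⊥ then 0 else if y = ⊤ then ⊤ else ENNReal.ofReal (Real.exp y.toReal)

/-- Truncation of an extended real number to `ℝ≥0∞` (negative values go to `0`). -/
def toENN (y : EReal) : ℝ≥0∞ :=
  if y = ⊤ then ⊤ else ENNReal.ofReal y.toReal

/-- Signed (upper-minus-lower) integral of an `EReal`-valued function against a measure. -/
def eIntegral (μ : Measure ℝ) (ψ : ℝ → EReal) : EReal :=
  ((∫⁻ x, toENN (ψ x) ∂μ : ℝ≥0∞) : EReal) - ((∫⁻ x, toENN (-(ψ x)) ∂μ : ℝ≥0∞) : EReal)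

/-- Concavity for `EReal`-valued functions on `ℝ`. -/
def EConcave (ψ : ℝ → EReal) : Prop :=
  ∀ x y : ℝ, ∀ t : ℝ, 0 ≤ t → t ≤ 1 →
    ((t : EReal) * ψ x + (((1 - t) : ℝ) : EReal) * ψ y) ≤ ψ (t * x + (1 - t) * y)

/-- The class `SC₀` of proper, closed (upper semicontinuous), concave functions
`ℝ → [−∞, ∞)` that are symmetric about `0`. -/
def memSC0 (ψ : ℝ → EReal) : Prop :=
  (∀ x, ψ x < ⊤) ∧ (∃ x, ψ x ≠ ⊥) ∧ UpperSemicontinuous ψ ∧ EConcave ψ ∧ ∀ x, ψ (-x) = ψ x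

/-- The criterion function `Ψ(θ, ψ, F) = ∫ ψ(x − θ) dμ(x) − ∫ e^{ψ(x)} dx`. -/
def Psi (θ : ℝ) (ψ : ℝ → EReal) (μ : Measure ℝ) : EReal :=
  eIntegral μ (fun x => ψ (x - θ)) - ((∫⁻ x, expE (ψ x) : ℝ≥0∞) : EReal)

/-- `L(θ; F) = sup_{ψ ∈ SC₀} Ψ(θ, ψ, F)`. -/
def Ltheta (θ : ℝ) (μ : Measure ℝ) : EReal :=
  ⨆ ψ ∈ {ψ : ℝ → EReal | memSC0 ψ}, Psi θ ψ μ

/-- `L(F) = sup_{θ ∈ ℝ, ψ ∈ SC₀} Ψ(θ, ψ, F)`. -/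
def Lsup (μ : Measure ℝ) : EReal := ⨆ θ : ℝ, Ltheta θ μ

/-- Condition A: `μ` is a probability measure that is not a point mass,
with a finite first absolute moment. -/
def CondA (μ : Measure ℝ) : Prop :=
  IsProbabilityMeasure μ ∧ (∀ x : ℝ, μ ≠ Measure.dirac x) ∧
    (∫⁻ x, ENNReal.ofReal |x| ∂μ) < ⊤

/-- The empirical measure of the data `X₁, …, Xₙ`. -/
def empMeas {n : ℕ} (X : Fin n → ℝ) : Measure ℝ :=
  ((n : ℝ≥0∞))⁻¹ • ∑ i : Fin n, Measure.dirac (X i)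

/-- The empirical measure of the first `n` entries of a sequence. -/
def empSeq (X : ℕ → ℝ) (n : ℕ) : Measure ℝ :=
  ((n : ℝ≥0∞))⁻¹ • ∑ i ∈ Finset.range n, Measure.dirac (X i)

/-- The density `e^ψ` as a real-valued function. -/
def gReal (ψ : ℝ → EReal) (x : ℝ) : ℝ := (expE (ψ x)).toReal

/-- A knot of a concave function `ψ`: a point where the left and right derivatives
differ, or a boundary point of `dom ψ = {ψ > −∞}`. -/
def IsKnot (ψ : ℝ → EReal) (x : ℝ) : Prop :=
  x ∈ frontier {y : ℝ | ψ y ≠ ⊥} ∨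
    derivWithin (fun y => (ψ y).toReal) (Set.Iio x) x ≠
      derivWithin (fun y => (ψ y).toReal) (Set.Ioi x) x

/-- The class `𝒞` of proper closed concave functions `ℝ → [−∞, ∞)`. -/
def memC (φ : ℝ → EReal) : Prop :=
  (∀ x, φ x < ⊤) ∧ (∃ x, φ x ≠ ⊥) ∧ UpperSemicontinuous φ ∧ EConcave φ

/-- The criterion function `ω(φ, F) = ∫ φ dμ − ∫ e^{φ(x)} dx`. -/
def omegaF (φ : ℝ → EReal) (μ : Measure ℝ) : EReal :=
  eIntegral μ φ - ((∫⁻ x, expE (φ x) : ℝ≥0∞) : EReal)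

/-- `(θ, ψ)` maximizes `Ψ(·, ·, μ)` over `ℝ × SC₀`. -/
def IsMaximizer (θ : ℝ) (ψ : ℝ → EReal) (μ : Measure ℝ) : Prop :=
  memSC0 ψ ∧ ∀ (θ' : ℝ) (ψ' : ℝ → EReal), memSC0 ψ' → Psi θ' ψ' μ ≤ Psi θ ψ μ

/-- Condition B: the `θ`-component of a maximizer of `Ψ(·, ·, μ)` is unique. -/
def CondB (μ : Measure ℝ) : Prop :=
  ∀ (θ₁ θ₂ : ℝ) (ψ₁ ψ₂ : ℝ → EReal),
    IsMaximizer θ₁ ψ₁ μ → IsMaximizer θ₂ ψ₂ μ → θ₁ = θ₂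

/-- `J(F) = {x : 0 < F(x) < 1}`. -/
def Jset (μ : Measure ℝ) : Set ℝ := {x : ℝ | 0 < μ (Set.Iic x) ∧ μ (Set.Iic x) < 1}

/-- The Hellinger distance between two densities. -/
def Hdist (f g : ℝ → ℝ) : ℝ :=
  Real.sqrt ((1 / 2) * ∫ x, (Real.sqrt (f x) - Real.sqrt (g x)) ^ 2)

/-- Finite Fisher information for location: `g` is a.e. differentiable with
square-integrable score. -/
def FiniteFisher (g : ℝ → ℝ) : Prop :=
  ∃ D : ℝ → ℝ, (∀ᵐ x : ℝ, HasDerivAt g (D x) x) ∧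
    (∫⁻ x, ENNReal.ofReal ((D x) ^ 2 / g x)) < ⊤

/-- The symmetrization `μ^{sym}_θ = (μ + R_θ#μ)/2` of a measure about `θ`. -/
def symMeas (θ : ℝ) (μ : Measure ℝ) : Measure ℝ :=
  ((2 : ℝ≥0∞))⁻¹ • (μ + Measure.map (fun x => 2 * θ - x) μ)

end

/-!
The functions `ψ - r` with `r` convex and even are again in `SC₀`, so a maximizer `ψ` satisfies
`∫ e^ψ ≤ ∫ r(x - θ) dμ + ∫ e^(ψ - r)`. On the other hand `e^(-r) (1 + r) ≤ 1` gives
`∫ r e^(ψ - r) + ∫ e^(ψ - r) ≤ ∫ e^ψ`. Hence `∫ r e^(ψ - r) ≤ ∫ r(x - θ) dμ`; take `r = t q`,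
divide by `t` and let `t → 0` to obtain `∫ q e^ψ ≤ ∫ q(x - θ) dμ`. Comparing with `-q ∈ SC₀`
ensures that `Ψ(θ, ψ, μ) > -∞`, so that nothing infinite is cancelled. The second moment is the
case `q(x) = x²`.
-/

lemma expE_eq_exp (y : EReal) : expE y = y.exp := by
  induction y using EReal.rec <;> simp [expE]

lemma expE_sub_coe (y : EReal) (a : ℝ) :
    expE (y - a) = ENNReal.ofReal (Real.exp (-a)) * expE y := by
  rw [sub_eq_add_neg, ← EReal.coe_neg, expE_eq_exp, expE_eq_exp, EReal.exp_add, EReal.exp_coe,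
    mul_comm]

lemma measurable_expE : Measurable expE :=
  funext expE_eq_exp ▸ EReal.measurable_exp

lemma ofReal_mul_expE_sub_add_le (y : EReal) {a : ℝ} (ha : 0 ≤ a) :
    ENNReal.ofReal a * expE (y - a) + expE (y - a) ≤ expE y := by
  have hexp : (a + 1) * Real.exp (-a) ≤ 1 := by
    rw [Real.exp_neg, ← div_eq_mul_inv, div_le_one (Real.exp_pos a)]
    exact Real.add_one_le_exp a
  calc ENNReal.ofReal a * expE (y - a) + expE (y - a)
      = ENNReal.ofReal ((a + 1) * Real.exp (-a)) * expE y := by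
        rw [ENNReal.ofReal_mul (by positivity), ENNReal.ofReal_add ha zero_le_one,
          ENNReal.ofReal_one, expE_sub_coe]
        ring
    _ ≤ expE y := mul_le_of_le_one_left' (ENNReal.ofReal_le_one.2 hexp)

lemma toENN_eq_toENNReal (y : EReal) : toENN y = y.toENNReal := rfl

lemma coe_toENN_sub_coe_toENN_neg (y : EReal) : (toENN y : EReal) - toENN (-y) = y := by
  rw [toENN_eq_toENNReal, toENN_eq_toENNReal]
  rcases le_total 0 y with hy | hy
  · rw [EReal.coe_toENNReal hy, EReal.toENNReal_of_nonpos (EReal.neg_le_zero.2 hy),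
      EReal.coe_ennreal_zero, sub_zero]
  · rw [EReal.toENNReal_of_nonpos hy, EReal.coe_toENNReal (EReal.neg_nonneg.2 hy),
      EReal.coe_ennreal_zero, zero_sub, neg_neg]

lemma eIntegral_congr_ae {μ : Measure ℝ} {φ φ' : ℝ → EReal} (h : φ =ᵐ[μ] φ') :
    eIntegral μ φ = eIntegral μ φ' := by
  have hpos : ∫⁻ x, toENN (φ x) ∂μ = ∫⁻ x, toENN (φ' x) ∂μ := lintegral_congr_ae (h.fun_comp toENN)
  have hneg : ∫⁻ x, toENN (-φ x) ∂μ = ∫⁻ x, toENN (-φ' x) ∂μ :=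
    lintegral_congr_ae (h.fun_comp fun y => toENN (-y))
  rw [eIntegral, eIntegral, hpos, hneg]

lemma eIntegral_coe {μ : Measure ℝ} {f : ℝ → ℝ} (hf : Integrable f μ) :
    eIntegral μ (fun x => (f x : EReal)) = ((∫ x, f x ∂μ : ℝ) : EReal) := by
  have hpos : ∫⁻ x, ENNReal.ofReal (f x) ∂μ ≠ ⊤ := hf.lintegral_lt_top.ne
  have hneg : ∫⁻ x, ENNReal.ofReal (-f x) ∂μ ≠ ⊤ := hf.neg.lintegral_lt_top.ne
  rw [integral_eq_lintegral_pos_part_sub_lintegral_neg_part hf, EReal.coe_sub,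
    EReal.coe_ennreal_toReal hpos, EReal.coe_ennreal_toReal hneg]
  rfl

lemma lintegral_toENN_neg_ne_top {μ : Measure ℝ} {φ : ℝ → EReal} (h : eIntegral μ φ ≠ ⊥) :
    ∫⁻ x, toENN (-φ x) ∂μ ≠ ⊤ := by
  contrapose h
  rw [eIntegral, h, EReal.coe_ennreal_top, EReal.sub_top]

lemma exists_integrable_ae_eq_coe {μ : Measure ℝ} {φ : ℝ → EReal} (hφ : Measurable φ)
    (hpos : ∫⁻ x, toENN (φ x) ∂μ ≠ ⊤) (hneg : ∫⁻ x, toENN (-φ x) ∂μ ≠ ⊤) :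
    ∃ f : ℝ → ℝ, Integrable f μ ∧ φ =ᵐ[μ] fun x => (f x : EReal) := by
  simp only [toENN_eq_toENNReal] at hpos hneg
  have hpos_meas : Measurable fun x => (φ x).toENNReal := hφ.ereal_toENNReal
  have hneg_meas : Measurable fun x => (-φ x).toENNReal := hφ.neg.ereal_toENNReal
  refine ⟨fun x => (φ x).toENNReal.toReal - (-φ x).toENNReal.toReal,
    (integrable_toReal_of_lintegral_ne_top hpos_meas.aemeasurable hpos).sub
      (integrable_toReal_of_lintegral_ne_top hneg_meas.aemeasurable hneg), ?_⟩
  filter_upwards [ae_lt_top hpos_meas hpos, ae_lt_top hneg_meas hneg] with x hx hx'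
  rw [EReal.coe_sub, EReal.coe_ennreal_toReal hx.ne, EReal.coe_ennreal_toReal hx'.ne]
  exact (coe_toENN_sub_coe_toENN_neg (φ x)).symm

lemma Psi_ne_bot_iff {θ : ℝ} {ψ : ℝ → EReal} {μ : Measure ℝ} :
    Psi θ ψ μ ≠ ⊥ ↔ eIntegral μ (fun x => ψ (x - θ)) ≠ ⊥ ∧ ∫⁻ x, expE (ψ x) ≠ ⊤ := by
  simp only [Psi, sub_eq_add_neg, ne_eq, EReal.add_eq_bot_iff, EReal.neg_eq_bot_iff,
    EReal.coe_ennreal_eq_top_iff, not_or]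

lemma memSC0_zero : memSC0 fun _ => 0 :=
  ⟨fun _ => EReal.zero_lt_top, ⟨0, EReal.zero_ne_bot⟩, upperSemicontinuous_const,
    fun x y t _ _ => by simp, fun _ => rfl⟩

namespace memSC0

variable {ψ : ℝ → EReal}

lemma measurable (hψ : memSC0 ψ) : Measurable ψ :=
  hψ.2.2.1.measurable

lemma le_apply_zero (hψ : memSC0 ψ) (x : ℝ) : ψ x ≤ ψ 0 := by
  have hmid := hψ.2.2.2.1 x (-x) (1 / 2) (by norm_num) (by norm_num)
  have hzero : (1 / 2 : ℝ) * x + (1 - 1 / 2) * -x = 0 := by ring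
  rwa [hψ.2.2.2.2 x, ← EReal.right_distrib_of_nonneg (by norm_num) (by norm_num),
    ← EReal.coe_add, add_sub_cancel, EReal.coe_one, one_mul, hzero] at hmid

lemma lintegral_toENN_ne_top (hψ : memSC0 ψ) (μ : Measure ℝ) [IsFiniteMeasure μ] (θ : ℝ) :
    ∫⁻ x, toENN (ψ (x - θ)) ∂μ ≠ ⊤ := by
  have hle : ∫⁻ x, toENN (ψ (x - θ)) ∂μ ≤ ∫⁻ _, toENN (ψ 0) ∂μ :=
    lintegral_mono fun x => EReal.toENNReal_le_toENNReal (hψ.le_apply_zero _)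
  refine ne_top_of_le_ne_top ?_ hle
  rw [lintegral_const]
  exact ENNReal.mul_ne_top (EReal.toENNReal_ne_top_iff.2 (hψ.1 0).ne) (measure_ne_top μ univ)

lemma sub_convex (hψ : memSC0 ψ) {r : ℝ → ℝ} (hr : ConvexOn ℝ univ r) (hr_even : r.Even) :
    memSC0 fun x => ψ x - r x := by
  obtain ⟨hlt_top, ⟨x₀, hx₀⟩, husc, hconc, hsymm⟩ := hψ
  simp only [sub_eq_add_neg, ← EReal.coe_neg]
  refine ⟨fun x => EReal.add_lt_top (hlt_top x).ne (EReal.coe_ne_top _),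
    ⟨x₀, by simp only [ne_eq, EReal.add_eq_bot_iff, hx₀, EReal.coe_ne_bot, or_self,
      not_false_eq_true]⟩, ?_, ?_, fun x => by simp only [hsymm x, hr_even x]⟩
  · have hcont : Continuous fun x => ((-r x : ℝ) : EReal) :=
      continuous_coe_real_ereal.comp hr.locallyLipschitz.continuous.neg
    exact husc.add' hcont.upperSemicontinuous fun x =>
      EReal.continuousAt_add (.inr (EReal.coe_ne_bot _)) (.inr (EReal.coe_ne_top _))
  · intro x y t ht₀ ht₁
    have ht₁' : 0 ≤ 1 - t := sub_nonneg.2 ht₁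
    have hconv : t * -r x + (1 - t) * -r y ≤ -r (t * x + (1 - t) * y) := by
      have h := hr.2 (mem_univ x) (mem_univ y) ht₀ ht₁' (by ring)
      simp only [smul_eq_mul] at h
      linarith
    rw [EReal.left_distrib_of_nonneg_of_ne_top (mod_cast ht₀) (EReal.coe_ne_top _),
      EReal.left_distrib_of_nonneg_of_ne_top (mod_cast ht₁') (EReal.coe_ne_top _),
      add_add_add_comm]
    exact add_le_add (hconc x y t ht₀ ht₁) (mod_cast hconv)

end memSC0

lemma le_ofReal_add_of_sub_sub_le {a s : ℝ} {I J : ℝ≥0∞} (hI : I ≠ ⊤)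
    (h : (a : EReal) - s - J ≤ a - I) : I ≤ ENNReal.ofReal s + J := by
  rcases eq_or_ne J ⊤ with rfl | hJ
  · simp
  lift I to ℝ≥0 using hI
  lift J to ℝ≥0 using hJ
  have hreal : a - s - J ≤ a - I := by
    rw [← EReal.coe_ennreal_toReal ENNReal.coe_ne_top,
      ← EReal.coe_ennreal_toReal ENNReal.coe_ne_top] at h
    exact_mod_cast h
  have hsum : (I : ℝ) ≤ s + J := by linarith
  rw [← ENNReal.ofReal_coe_nnreal (p := I), ← ENNReal.ofReal_coe_nnreal (p := J)]
  exact (ENNReal.ofReal_le_ofReal hsum).trans ENNReal.ofReal_add_le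

open scoped Topology in
lemma lintegral_le_of_forall_lintegral_exp_mul_le {α : Type*} [MeasurableSpace α] {ν : Measure α}
    {q : α → ℝ} {g : α → ℝ≥0∞} {C : ℝ≥0∞} (hq : Measurable q) (hg : Measurable g)
    (h : ∀ t : ℝ, 0 < t → ∫⁻ x, ENNReal.ofReal (Real.exp (-(t * q x))) * g x ∂ν ≤ C) :
    ∫⁻ x, g x ∂ν ≤ C := by
  have hlim (x : α) : Tendsto (fun t : ℝ => ENNReal.ofReal (Real.exp (-(t * q x))) * g x)
      (𝓝[>] 0) (𝓝 (g x)) := by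
    have hcont : Continuous fun t : ℝ => ENNReal.ofReal (Real.exp (-(t * q x))) :=
      ENNReal.continuous_ofReal.comp (by fun_prop)
    have hone := (hcont.tendsto 0).mono_left (nhdsWithin_le_nhds (s := Ioi 0))
    simp only [zero_mul, neg_zero, Real.exp_zero, ENNReal.ofReal_one] at hone
    simpa only [one_mul] using ENNReal.Tendsto.mul_const hone (.inl one_ne_zero)
  have hbound : ∀ᶠ t : ℝ in 𝓝[>] 0,
      ∫⁻ x, ENNReal.ofReal (Real.exp (-(t * q x))) * g x ∂ν ≤ C :=
    eventually_nhdsWithin_of_forall h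
  calc ∫⁻ x, g x ∂ν
      = ∫⁻ x, liminf (fun t : ℝ => ENNReal.ofReal (Real.exp (-(t * q x))) * g x)
          (𝓝[>] 0) ∂ν := lintegral_congr fun x => (hlim x).liminf_eq.symm
    _ ≤ liminf (fun t : ℝ => ∫⁻ x, ENNReal.ofReal (Real.exp (-(t * q x))) * g x ∂ν)
          (𝓝[>] 0) := lintegral_liminf_le fun t => by fun_prop
    _ ≤ C := liminf_le_of_frequently_le' hbound.frequently

namespace IsMaximizer

variable {θ : ℝ} {ψ : ℝ → EReal} {μ : Measure ℝ}

lemma Psi_ne_bot (hmax : IsMaximizer θ ψ μ) {q : ℝ → ℝ} (hq : ConvexOn ℝ univ q)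
    (hq_even : q.Even) (hq_exp : Integrable fun x => Real.exp (-q x))
    (hq_int : Integrable (fun x => q (x - θ)) μ) : Psi θ ψ μ ≠ ⊥ := by
  refine ne_bot_of_le_ne_bot ?_ (hmax.2 θ _ (memSC0_zero.sub_convex hq hq_even))
  simp only [Psi_ne_bot_iff, zero_sub, ← EReal.coe_neg]
  refine ⟨?_, ?_⟩
  · rw [eIntegral_coe hq_int.fun_neg]
    exact EReal.coe_ne_bot _
  · simp only [expE_eq_exp, EReal.exp_coe]
    exact hq_exp.lintegral_lt_top.ne

lemma lintegral_expE_le [IsFiniteMeasure μ] (hmax : IsMaximizer θ ψ μ) (hΨ : Psi θ ψ μ ≠ ⊥)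
    {r : ℝ → ℝ} (hr : ConvexOn ℝ univ r) (hr_even : r.Even)
    (hr_int : Integrable (fun x => r (x - θ)) μ) :
    ∫⁻ x, expE (ψ x) ≤
      ENNReal.ofReal (∫ x, r (x - θ) ∂μ) + ∫⁻ x, expE (ψ x - r x) := by
  obtain ⟨hE, hI⟩ := Psi_ne_bot_iff.1 hΨ
  have hψ_meas : Measurable fun x => ψ (x - θ) := hmax.1.measurable.comp (measurable_sub_const θ)
  obtain ⟨f, hf, hψf⟩ := exists_integrable_ae_eq_coe hψ_meas
    (hmax.1.lintegral_toENN_ne_top μ θ) (lintegral_toENN_neg_ne_top hE)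
  have hψ_sub : (fun x => ψ (x - θ) - r (x - θ)) =ᵐ[μ]
      fun x => ((f x - r (x - θ) : ℝ) : EReal) := by
    filter_upwards [hψf] with x hx
    rw [hx, EReal.coe_sub]
  have hsub : Integrable (fun x => f x - r (x - θ)) μ := hf.sub hr_int
  have hle := hmax.2 θ _ (hmax.1.sub_convex hr hr_even)
  rw [Psi, Psi, eIntegral_congr_ae hψf, eIntegral_congr_ae hψ_sub, eIntegral_coe hf,
    eIntegral_coe hsub, integral_sub hf hr_int, EReal.coe_sub] at hle
  exact le_ofReal_add_of_sub_sub_le hI hle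

lemma lintegral_mul_expE_sub_le [IsFiniteMeasure μ] (hmax : IsMaximizer θ ψ μ)
    (hΨ : Psi θ ψ μ ≠ ⊥) {r : ℝ → ℝ} (hr : ConvexOn ℝ univ r) (hr_even : r.Even)
    (hr_nonneg : 0 ≤ r) (hr_int : Integrable (fun x => r (x - θ)) μ) :
    ∫⁻ x, ENNReal.ofReal (r x) * expE (ψ x - r x) ≤ ENNReal.ofReal (∫ x, r (x - θ) ∂μ) := by
  have hmeas : Measurable fun x => expE (ψ x - r x) :=
    measurable_expE.comp (hmax.1.sub_convex hr hr_even).measurable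
  have hsum : (∫⁻ x, ENNReal.ofReal (r x) * expE (ψ x - r x)) + ∫⁻ x, expE (ψ x - r x) ≤
      ∫⁻ x, expE (ψ x) := by
    rw [← lintegral_add_right _ hmeas]
    exact lintegral_mono fun x => ofReal_mul_expE_sub_add_le (ψ x) (hr_nonneg x)
  have hfin : ∫⁻ x, expE (ψ x - r x) ≠ ⊤ :=
    ne_top_of_le_ne_top (Psi_ne_bot_iff.1 hΨ).2 (le_add_self.trans hsum)
  exact (ENNReal.add_le_add_iff_right hfin).1
    (hsum.trans (hmax.lintegral_expE_le hΨ hr hr_even hr_int))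

lemma lintegral_exp_mul_expE_le [IsFiniteMeasure μ] (hmax : IsMaximizer θ ψ μ)
    (hΨ : Psi θ ψ μ ≠ ⊥) {q : ℝ → ℝ} (hq : ConvexOn ℝ univ q) (hq_even : q.Even)
    (hq_nonneg : 0 ≤ q) (hq_int : Integrable (fun x => q (x - θ)) μ) {t : ℝ} (ht : 0 < t) :
    ∫⁻ x, ENNReal.ofReal (Real.exp (-(t * q x))) * (ENNReal.ofReal (q x) * expE (ψ x)) ≤
      ENNReal.ofReal (∫ x, q (x - θ) ∂μ) := by
  have hscaled := hmax.lintegral_mul_expE_sub_le hΨ (r := fun x => t * q x) (hq.smul ht.le)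
    (fun x => congrArg (t * ·) (hq_even x)) (fun x => mul_nonneg ht.le (hq_nonneg x))
    (hq_int.const_mul t)
  simp only [ENNReal.ofReal_mul ht.le, integral_const_mul, expE_sub_coe, mul_assoc] at hscaled
  rw [lintegral_const_mul' _ _ ENNReal.ofReal_ne_top,
    ENNReal.mul_le_mul_iff_right (ENNReal.ofReal_pos.2 ht).ne' ENNReal.ofReal_ne_top] at hscaled
  simpa only [mul_left_comm] using hscaled

end IsMaximizer

theorem statement7_general {μ : Measure ℝ} [IsFiniteMeasure μ] {θ : ℝ} {ψ : ℝ → EReal}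
    (hmax : IsMaximizer θ ψ μ) {q : ℝ → ℝ} (hq : ConvexOn ℝ univ q) (hq_even : q.Even)
    (hq_nonneg : 0 ≤ q) (hq_exp : Integrable fun x => Real.exp (-q x)) :
    ∫⁻ x, ENNReal.ofReal (q x) * expE (ψ x) ≤ ∫⁻ x, ENNReal.ofReal (q (x - θ)) ∂μ := by
  have hq_meas : Measurable q := hq.locallyLipschitz.continuous.measurable
  have hqθ_meas : Measurable fun x => q (x - θ) := hq_meas.comp (measurable_sub_const θ)
  have hqθ_nonneg (x : ℝ) : 0 ≤ q (x - θ) := hq_nonneg (x - θ)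
  rcases eq_or_ne (∫⁻ x, ENNReal.ofReal (q (x - θ)) ∂μ) ⊤ with htop | hfin
  · exact htop ▸ le_top
  have hq_int : Integrable (fun x => q (x - θ)) μ :=
    (lintegral_ofReal_ne_top_iff_integrable hqθ_meas.aestronglyMeasurable
      (.of_forall hqθ_nonneg)).1 hfin
  rw [← ofReal_integral_eq_lintegral_ofReal hq_int (.of_forall hqθ_nonneg)]
  exact lintegral_le_of_forall_lintegral_exp_mul_le hq_meas
    (hq_meas.ennreal_ofReal.mul (measurable_expE.comp hmax.1.measurable)) fun t ht =>
      hmax.lintegral_exp_mul_expE_le (hmax.Psi_ne_bot hq hq_even hq_exp hq_int) hq hq_even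
        hq_nonneg hq_int ht

lemma lintegral_empMeas {n : ℕ} (X : Fin n → ℝ) (f : ℝ → ℝ≥0∞) :
    ∫⁻ x, f x ∂empMeas X = (n : ℝ≥0∞)⁻¹ * ∑ i, f (X i) := by
  simp [empMeas, lintegral_smul_measure, lintegral_finsetSum_measure]

instance {n : ℕ} (X : Fin n → ℝ) : IsFiniteMeasure (empMeas X) where
  measure_univ_lt_top := by
    rw [← lintegral_one, lintegral_empMeas]
    simpa using (ENNReal.inv_mul_le_one (n : ℝ≥0∞)).trans_lt ENNReal.one_lt_top

lemma lintegral_ofReal_empMeas {n : ℕ} (X : Fin n → ℝ) {f : ℝ → ℝ} (hf : 0 ≤ f) :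
    ∫⁻ x, ENNReal.ofReal (f x) ∂empMeas X = ENNReal.ofReal ((n : ℝ)⁻¹ * ∑ i, f (X i)) := by
  rcases Nat.eq_zero_or_pos n with rfl | hn
  · simp [lintegral_empMeas]
  rw [lintegral_empMeas, ENNReal.ofReal_mul (by positivity),
    ENNReal.ofReal_inv_of_pos (by positivity), ENNReal.ofReal_natCast,
    ENNReal.ofReal_sum_of_nonneg fun i _ => hf (X i)]

/-- The second moment of `ĝₙ = e^{ψ̂ₙ}` is bounded by the empirical
second moment about `θ̂ₙ`: `∫ x² e^{ψ̂ₙ(x)} dx ≤ n⁻¹ Σᵢ (Xᵢ − θ̂ₙ)²`. -/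
theorem statement7 {n : ℕ} (X : Fin n → ℝ) (hne : ∃ i j, X i ≠ X j)
    (θhat : ℝ) (ψhat : ℝ → EReal)
    (hmax : IsMaximizer θhat ψhat (empMeas X)) :
    (∫⁻ x, ENNReal.ofReal (x ^ 2) * expE (ψhat x)) ≤
      ENNReal.ofReal ((n : ℝ)⁻¹ * ∑ i, (X i - θhat) ^ 2) := by
  have hexp : Integrable fun x : ℝ => Real.exp (-x ^ 2) := by
    simpa only [neg_one_mul] using integrable_exp_neg_mul_sq one_pos
  exact (statement7_general hmax even_two.convexOn_pow even_two.neg_pow sq_nonneg hexp).trans_eq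
    (lintegral_ofReal_empMeas X (f := fun x => (x - θhat) ^ 2) fun x => sq_nonneg (x - θhat))
end

section
/- Let μ be a probability measure on ℝ with ∫ |x| dμ(x) < ∞ that is invariant under the reflection R_θ(x) = 2θ − x, and let F be its distribution function. Then for every φ ∈ 𝒞 with ω(φ, F) > −∞, the symmetrized function φ̄(x) = (φ(x) + φ(2θ − x))/2 belongs to SC_θ = {ψ(· − θ) : ψ ∈ SC₀} and satisfies ω(φ, F) ≤ ω(φ̄, F); consequently sup_{φ ∈ 𝒞} ω(φ, F) = sup_{φ ∈ SC_θ} ω(φ, F). -/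
open MeasureTheory Filter Set
open scoped ENNReal NNReal

/-!
Write `R x = 2θ - x`. The functional `f ↦ ∫ f dμ` is additive and positively homogeneous on
functions with integrable negative part, so `R`-invariance of `μ` gives `∫ φ̄ dμ = ∫ φ dμ`, while
convexity of `exp` and `R`-invariance of Lebesgue measure give `∫ e^φ̄ ≤ ∫ e^φ`; hence
`ω(φ) ≤ ω(φ̄)`. That `φ̄` is proper also comes from `ω(φ) > -∞`: then `φ` and `φ ∘ R` are finite
`μ`-almost everywhere, hence simultaneously finite somewhere.
-/

section EReal

lemma toENN_eq_toENNReal_s9 : toENN = EReal.toENNReal := rfl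

lemma expE_eq_exp_s9 : expE = EReal.exp := by
  funext y
  induction y <;> simp [expE]

lemma coe_mul_add_of_nonneg {c : ℝ} (hc : 0 ≤ c) (a b : EReal) :
    (c : EReal) * (a + b) = c * a + c * b :=
  EReal.left_distrib_of_nonneg_of_ne_top (EReal.coe_nonneg.2 hc) (EReal.coe_ne_top c) a b

lemma coe_half_mul_add_self (a : EReal) : (((1 : ℝ) / 2 : ℝ) : EReal) * (a + a) = a := by
  have half_nonneg : (0 : EReal) ≤ ((1 / 2 : ℝ) : EReal) := by norm_num
  rw [coe_mul_add_of_nonneg (by norm_num), ← EReal.right_distrib_of_nonneg half_nonneg half_nonneg,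
    ← EReal.coe_add, add_halves, EReal.coe_one, one_mul]

lemma continuous_coe_mul (c : ℝ) : Continuous fun a : EReal => c * a :=
  continuous_iff_continuousAt.2 fun _ => EReal.Tendsto.const_mul tendsto_id
    (.inl (EReal.coe_ne_bot c)) (.inl (EReal.coe_ne_top c))

lemma coe_sub_coe_eq_of_add_eq_add {a b c d : ℝ≥0∞} (hb : b ≠ ⊤) (hd : d ≠ ⊤)
    (h : a + d = c + b) : (a : EReal) - b = c - d := by
  lift b to ℝ≥0 using hb
  lift d to ℝ≥0 using hd
  have h' : (a : EReal) + (d : ℝ) = c + (b : ℝ) := by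
    simpa only [EReal.coe_ennreal_add, EReal.coe_nnreal_eq_coe_real]
      using congrArg ENNReal.toEReal h
  calc
    (a : EReal) - (b : ℝ)
    _ = a + (d : ℝ) - (d : ℝ) - (b : ℝ) := by rw [EReal.add_sub_cancel_right]
    _ = c + (b : ℝ) - (b : ℝ) - (d : ℝ) := by
      rw [h', sub_eq_add_neg, sub_eq_add_neg, sub_eq_add_neg, sub_eq_add_neg, add_right_comm]
    _ = c - (d : ℝ) := by rw [EReal.add_sub_cancel_right]

lemma toENN_coe_mul {c : ℝ} (hc : 0 ≤ c) (a : EReal) :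
    toENN (c * a) = ENNReal.ofReal c * toENN a :=
  EReal.toENNReal_mul (EReal.coe_nonneg.2 hc)

/- In terms of positive and negative parts this is `(a + b)⁺ - (a + b)⁻ = (a⁺ - a⁻) + (b⁺ - b⁻)`,
with both sides moved so that no subtraction occurs; in this shape it survives infinite values. -/
lemma toENN_add_add_toENN_neg (a b : EReal) :
    toENN (a + b) + (toENN (-a) + toENN (-b)) = toENN a + toENN b + toENN (-(a + b)) := by
  rw [toENN_eq_toENNReal_s9]
  induction a with
  | bot => simp
  | top => induction b <;> simp
  | coe a =>
    induction b with
    | bot => simp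
    | top => simp
    | coe b =>
      have posPart_eq (r : ℝ) : max r 0 = r + max (-r) 0 := by
        linarith [max_zero_sub_max_neg_zero_eq_self r]
      rw [← EReal.coe_ennreal_eq_coe_ennreal_iff]
      simp only [← EReal.coe_add, ← EReal.coe_neg, EReal.real_coe_toENNReal,
        EReal.coe_ennreal_add, EReal.coe_ennreal_ofReal, EReal.coe_eq_coe_iff]
      rw [posPart_eq (a + b), posPart_eq a, posPart_eq b]
      ring

lemma toENN_neg_add_le (a b : EReal) : toENN (-(a + b)) ≤ toENN (-a) + toENN (-b) := by
  rw [toENN_eq_toENNReal_s9]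
  by_cases ha : a = ⊥
  · simp [ha]
  by_cases hb : b = ⊥
  · simp [hb]
  rw [EReal.neg_add (.inl ha) (.inr hb)]
  exact EReal.toENNReal_add_le

lemma expE_convex_combination_le {s t : ℝ} (hs : 0 < s) (ht : 0 < t) (hst : s + t = 1)
    (a b : EReal) :
    expE (s * a + t * b) ≤ ENNReal.ofReal s * expE a + ENNReal.ofReal t * expE b := by
  rw [expE_eq_exp_s9]
  induction a with
  | bot => simp [EReal.coe_mul_bot_of_pos hs]
  | top => simp [ENNReal.mul_top, hs]
  | coe a =>
    induction b with
    | bot => simp [EReal.coe_mul_bot_of_pos ht]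
    | top => simp [ENNReal.mul_top, ht]
    | coe b =>
      simp only [← EReal.coe_mul, ← EReal.coe_add, EReal.exp_coe]
      rw [← ENNReal.ofReal_mul hs.le, ← ENNReal.ofReal_mul ht.le,
        ← ENNReal.ofReal_add (by positivity) (by positivity)]
      exact ENNReal.ofReal_le_ofReal
        (convexOn_exp.2 (mem_univ a) (mem_univ b) hs.le ht.le hst)

end EReal

section Measurability

variable {α : Type*} [MeasurableSpace α] {μ : Measure α} {f : α → EReal}

lemma measurable_toENN_comp (hf : Measurable f) : Measurable fun x => toENN (f x) :=
  measurable_ereal_toENNReal.comp hf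

lemma measurable_toENN_neg_comp (hf : Measurable f) : Measurable fun x => toENN (-f x) :=
  measurable_toENN_comp hf.neg

lemma ae_ne_bot_of_lintegral_toENN_neg_ne_top (hf : Measurable f)
    (hf_neg : ∫⁻ x, toENN (-f x) ∂μ ≠ ⊤) : ∀ᵐ x ∂μ, f x ≠ ⊥ := by
  filter_upwards [ae_lt_top (measurable_toENN_neg_comp hf) hf_neg] with x hx hx_bot
  simp [toENN, hx_bot] at hx

end Measurability

section Concave

variable {f g : ℝ → EReal}

lemma EConcave.comp_affine (hf : EConcave f) (a b : ℝ) : EConcave fun x => f (a * x + b) := by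
  intro x y t ht₀ ht₁
  convert hf (a * x + b) (a * y + b) t ht₀ ht₁ using 2
  ring

lemma EConcave.add (hf : EConcave f) (hg : EConcave g) : EConcave fun x => f x + g x := by
  intro x y t ht₀ ht₁
  rw [coe_mul_add_of_nonneg ht₀, coe_mul_add_of_nonneg (sub_nonneg.2 ht₁), add_add_add_comm]
  exact add_le_add (hf x y t ht₀ ht₁) (hg x y t ht₀ ht₁)

lemma EConcave.const_mul (hf : EConcave f) {c : ℝ} (hc : 0 ≤ c) :
    EConcave fun x => c * f x := by
  intro x y t ht₀ ht₁
  rw [mul_left_comm (t : EReal), mul_left_comm ((1 - t : ℝ) : EReal), ← coe_mul_add_of_nonneg hc]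
  exact mul_le_mul_of_nonneg_left (hf x y t ht₀ ht₁) (EReal.coe_nonneg.2 hc)

lemma memC.comp_affine (hf : memC f) {a : ℝ} (ha : a ≠ 0) (b : ℝ) :
    memC fun x => f (a * x + b) := by
  obtain ⟨hf_top, ⟨x, hx⟩, hf_usc, hf_conc⟩ := hf
  refine ⟨fun _ => hf_top _, ⟨(x - b) / a, ?_⟩, hf_usc.comp (by fun_prop),
    hf_conc.comp_affine a b⟩
  simpa [mul_div_cancel₀ _ ha] using hx

lemma memC.add (hf : memC f) (hg : memC g) (hfg : ∃ x, f x ≠ ⊥ ∧ g x ≠ ⊥) :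
    memC fun x => f x + g x := by
  obtain ⟨hf_top, -, hf_usc, hf_conc⟩ := hf
  obtain ⟨hg_top, -, hg_usc, hg_conc⟩ := hg
  refine ⟨fun x => EReal.add_lt_top (hf_top x).ne (hg_top x).ne,
    hfg.imp fun x hx => EReal.add_ne_bot_iff.2 hx, hf_usc.add' hg_usc fun x => ?_,
    hf_conc.add hg_conc⟩
  exact EReal.continuousAt_add (.inl (hf_top x).ne) (.inr (hg_top x).ne)

lemma memC.const_mul (hf : memC f) {c : ℝ} (hc : 0 < c) : memC fun x => c * f x := by
  obtain ⟨hf_top, ⟨x, hx⟩, hf_usc, hf_conc⟩ := hf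
  have hmono : Monotone fun a : EReal => c * a := fun _ _ hab =>
    mul_le_mul_of_nonneg_left hab (EReal.coe_nonneg.2 hc.le)
  refine ⟨fun y => ?_, ⟨x, ?_⟩, (continuous_coe_mul c).comp_upperSemicontinuous hf_usc hmono,
    hf_conc.const_mul hc.le⟩
  · simp [lt_top_iff_ne_top, EReal.mul_eq_top, (hf_top y).ne, hc.not_gt]
  · simp [EReal.mul_eq_bot, (hf_top x).ne, hx, hc.not_gt]

lemma memC.measurable (hf : memC f) : Measurable f :=
  hf.2.2.1.measurable

lemma exists_memSC0_comp_sub_iff {θ : ℝ} :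
    (∃ ψ, memSC0 ψ ∧ f = fun x => ψ (x - θ)) ↔ memC f ∧ ∀ x, f (2 * θ - x) = f x := by
  constructor
  · rintro ⟨ψ, ⟨hψ_top, hψ_proper, hψ_usc, hψ_conc, hψ_even⟩, rfl⟩
    have hψ : memC ψ := ⟨hψ_top, hψ_proper, hψ_usc, hψ_conc⟩
    refine ⟨by simpa [sub_eq_add_neg] using hψ.comp_affine one_ne_zero (-θ), fun x => ?_⟩
    calc
      ψ (2 * θ - x - θ) = ψ (-(x - θ)) := by congr 1; ring
      _ = ψ (x - θ) := hψ_even (x - θ)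
  · rintro ⟨hf, hf_symm⟩
    obtain ⟨hψ_top, hψ_proper, hψ_usc, hψ_conc⟩ : memC fun x => f (x + θ) := by
      simpa using hf.comp_affine one_ne_zero θ
    refine ⟨fun x => f (x + θ), ⟨hψ_top, hψ_proper, hψ_usc, hψ_conc, fun x => ?_⟩, by simp⟩
    calc
      f (-x + θ) = f (2 * θ - (x + θ)) := by congr 1; ring
      _ = f (x + θ) := hf_symm (x + θ)

end Concave

section Integral

variable {μ ν : Measure ℝ} {f g : ℝ → EReal}

lemma eIntegral_add (hf : Measurable f) (hg : Measurable g)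
    (hf_neg : ∫⁻ x, toENN (-f x) ∂μ ≠ ⊤) (hg_neg : ∫⁻ x, toENN (-g x) ∂μ ≠ ⊤) :
    eIntegral μ (fun x => f x + g x) = eIntegral μ f + eIntegral μ g := by
  have hfg : Measurable fun x => f x + g x := hf.add hg
  have hpf := measurable_toENN_comp hf
  have hnf := measurable_toENN_neg_comp hf
  have lintegral_neg_add_le : ∫⁻ x, toENN (-(f x + g x)) ∂μ
      ≤ ∫⁻ x, toENN (-f x) ∂μ + ∫⁻ x, toENN (-g x) ∂μ := by
    rw [← lintegral_add_left hnf]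
    exact lintegral_mono fun x => toENN_neg_add_le (f x) (g x)
  have lintegral_parts :
      ∫⁻ x, toENN (f x + g x) ∂μ + (∫⁻ x, toENN (-f x) ∂μ + ∫⁻ x, toENN (-g x) ∂μ)
        = ∫⁻ x, toENN (f x) ∂μ + ∫⁻ x, toENN (g x) ∂μ + ∫⁻ x, toENN (-(f x + g x)) ∂μ := by
    rw [← lintegral_add_left hnf, ← lintegral_add_left hpf,
      ← lintegral_add_left (measurable_toENN_comp hfg),
      ← lintegral_add_right _ (measurable_toENN_neg_comp hfg)]
    exact lintegral_congr fun x => toENN_add_add_toENN_neg (f x) (g x)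
  have sum_neg_ne_top := ENNReal.add_ne_top.2 ⟨hf_neg, hg_neg⟩
  unfold eIntegral
  rw [coe_sub_coe_eq_of_add_eq_add (ne_top_of_le_ne_top sum_neg_ne_top lintegral_neg_add_le)
      sum_neg_ne_top lintegral_parts,
    EReal.coe_ennreal_add, EReal.coe_ennreal_add,
    EReal.add_sub_add_comm (.inl (EReal.coe_ennreal_ne_bot _)) (.inr (EReal.coe_ennreal_ne_bot _))]

lemma eIntegral_const_mul {c : ℝ} (hc : 0 ≤ c) (f : ℝ → EReal) :
    eIntegral μ (fun x => c * f x) = c * eIntegral μ f := by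
  have lintegral_eq (h : ℝ → EReal) :
      ((∫⁻ x, toENN (c * h x) ∂μ : ℝ≥0∞) : EReal) = c * (∫⁻ x, toENN (h x) ∂μ : ℝ≥0∞) := by
    simp only [toENN_coe_mul hc]
    rw [lintegral_const_mul' _ _ ENNReal.ofReal_ne_top, EReal.coe_ennreal_mul,
      EReal.coe_ennreal_ofReal, max_eq_left hc]
  simp only [eIntegral, ← mul_neg, lintegral_eq]
  rw [sub_eq_add_neg, sub_eq_add_neg, ← mul_neg, ← coe_mul_add_of_nonneg hc]

lemma eIntegral_comp {T : ℝ → ℝ} (hT : MeasurePreserving T μ ν) (hf : Measurable f) :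
    eIntegral μ (fun x => f (T x)) = eIntegral ν f := by
  rw [eIntegral, eIntegral, hT.lintegral_comp (measurable_toENN_comp hf),
    hT.lintegral_comp (measurable_toENN_neg_comp hf)]

lemma lintegral_toENN_neg_ne_top_of_omegaF_ne_bot (hω : omegaF f μ ≠ ⊥) :
    ∫⁻ x, toENN (-f x) ∂μ ≠ ⊤ := by
  intro h
  simp [omegaF, eIntegral, h] at hω

end Integral

/-- The symmetrization `φ̄(x) = (φ(x) + φ(2θ - x)) / 2` of `φ` about `θ`. -/
noncomputable def symmetrization (θ : ℝ) (φ : ℝ → EReal) : ℝ → EReal :=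
  fun x => (((1 : ℝ) / 2 : ℝ) : EReal) * (φ x + φ (2 * θ - x))

section Symmetrization

variable {μ : Measure ℝ} {θ : ℝ} {φ : ℝ → EReal}

lemma symmetrization_reflection (θ : ℝ) (φ : ℝ → EReal) (x : ℝ) :
    symmetrization θ φ (2 * θ - x) = symmetrization θ φ x := by
  rw [symmetrization, symmetrization, sub_sub_cancel, add_comm]

lemma memC.symmetrization (hφ : memC φ) (hφ_fin : ∃ x, φ x ≠ ⊥ ∧ φ (2 * θ - x) ≠ ⊥) :
    memC (symmetrization θ φ) := by
  have hφ_refl : memC fun x => φ (2 * θ - x) := by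
    simpa [neg_add_eq_sub] using hφ.comp_affine (neg_ne_zero.2 one_ne_zero) (2 * θ)
  exact (hφ.add hφ_refl hφ_fin).const_mul one_half_pos

lemma exists_ne_bot_and_reflection_ne_bot [NeZero μ]
    (hμ : MeasurePreserving (fun x => 2 * θ - x) μ μ) (hφ : Measurable φ)
    (hφ_neg : ∫⁻ x, toENN (-φ x) ∂μ ≠ ⊤) : ∃ x, φ x ≠ ⊥ ∧ φ (2 * θ - x) ≠ ⊥ := by
  have hφ_fin : ∀ᵐ x ∂μ, φ x ≠ ⊥ := ae_ne_bot_of_lintegral_toENN_neg_ne_top hφ hφ_neg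
  exact (hφ_fin.and (hμ.quasiMeasurePreserving.ae hφ_fin)).exists

lemma eIntegral_symmetrization (hμ : MeasurePreserving (fun x => 2 * θ - x) μ μ)
    (hφ : Measurable φ) (hφ_neg : ∫⁻ x, toENN (-φ x) ∂μ ≠ ⊤) :
    eIntegral μ (symmetrization θ φ) = eIntegral μ φ := by
  have hφ_refl_neg : ∫⁻ x, toENN (-φ (2 * θ - x)) ∂μ ≠ ⊤ := by
    rwa [hμ.lintegral_comp (measurable_toENN_neg_comp hφ)]
  have hφ_refl : Measurable fun x => φ (2 * θ - x) := hφ.comp hμ.measurable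
  unfold symmetrization
  rw [eIntegral_const_mul one_half_pos.le, eIntegral_add hφ hφ_refl hφ_neg hφ_refl_neg,
    eIntegral_comp hμ hφ, coe_half_mul_add_self]

lemma lintegral_expE_symmetrization_le (θ : ℝ) (hφ : Measurable φ) :
    ∫⁻ x, expE (symmetrization θ φ x) ≤ ∫⁻ x, expE (φ x) := by
  set c : ℝ≥0∞ := ENNReal.ofReal (1 / 2) with hc
  have hφ_exp : Measurable fun x => expE (φ x) := measurable_expE.comp hφ
  calc
    ∫⁻ x, expE (symmetrization θ φ x)
    _ ≤ ∫⁻ x, (c * expE (φ x) + c * expE (φ (2 * θ - x))) := by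
      refine lintegral_mono fun x => ?_
      rw [symmetrization, coe_mul_add_of_nonneg (by norm_num)]
      exact expE_convex_combination_le one_half_pos one_half_pos (add_halves 1) _ _
    _ = c * (∫⁻ x, expE (φ x)) + c * ∫⁻ x, expE (φ (2 * θ - x)) := by
      rw [lintegral_add_left (hφ_exp.const_mul c), lintegral_const_mul' _ _ ENNReal.ofReal_ne_top,
        lintegral_const_mul' _ _ ENNReal.ofReal_ne_top]
    _ = (c + c) * ∫⁻ x, expE (φ x) := by
      rw [lintegral_sub_left_eq_self fun x => expE (φ x), add_mul]
    _ = ∫⁻ x, expE (φ x) := by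
      rw [hc, ← ENNReal.ofReal_add (by norm_num) (by norm_num), add_halves, ENNReal.ofReal_one,
        one_mul]

lemma omegaF_le_omegaF_symmetrization (hμ : MeasurePreserving (fun x => 2 * θ - x) μ μ)
    (hφ : Measurable φ) (hφ_neg : ∫⁻ x, toENN (-φ x) ∂μ ≠ ⊤) :
    omegaF φ μ ≤ omegaF (symmetrization θ φ) μ := by
  rw [omegaF, omegaF, eIntegral_symmetrization hμ hφ hφ_neg]
  exact EReal.sub_le_sub le_rfl
    (EReal.coe_ennreal_le_coe_ennreal_iff.2 (lintegral_expE_symmetrization_le θ hφ))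

end Symmetrization

theorem statement9_general (μ : Measure ℝ) [NeZero μ] (θ : ℝ)
    (hsym : Measure.map (fun x => 2 * θ - x) μ = μ) :
    (∀ φ : ℝ → EReal, memC φ → omegaF φ μ ≠ ⊥ →
        (∃ ψ : ℝ → EReal, memSC0 ψ ∧ symmetrization θ φ = fun x => ψ (x - θ)) ∧
          omegaF φ μ ≤ omegaF (symmetrization θ φ) μ) ∧
      (⨆ φ ∈ {φ : ℝ → EReal | memC φ}, omegaF φ μ) =
        ⨆ φ ∈ {φ : ℝ → EReal | ∃ ψ, memSC0 ψ ∧ φ = fun x => ψ (x - θ)}, omegaF φ μ := by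
  have hμ : MeasurePreserving (fun x => 2 * θ - x) μ μ := ⟨by fun_prop, hsym⟩
  have symmetrization_improves (φ : ℝ → EReal) (hφ : memC φ) (hω : omegaF φ μ ≠ ⊥) :
      (∃ ψ, memSC0 ψ ∧ symmetrization θ φ = fun x => ψ (x - θ)) ∧
        omegaF φ μ ≤ omegaF (symmetrization θ φ) μ := by
    have hφ_neg := lintegral_toENN_neg_ne_top_of_omegaF_ne_bot hω
    have hφ_fin := exists_ne_bot_and_reflection_ne_bot hμ hφ.measurable hφ_neg
    exact ⟨exists_memSC0_comp_sub_iff.2 ⟨hφ.symmetrization hφ_fin, symmetrization_reflection θ φ⟩,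
      omegaF_le_omegaF_symmetrization hμ hφ.measurable hφ_neg⟩
  refine ⟨symmetrization_improves, le_antisymm (iSup₂_le fun φ hφ => ?_) ?_⟩
  · rcases eq_or_ne (omegaF φ μ) ⊥ with hω | hω
    · exact hω ▸ bot_le
    · obtain ⟨hmem, hle⟩ := symmetrization_improves φ hφ hω
      exact hle.trans (le_iSup₂_of_le _ hmem le_rfl)
  · exact biSup_mono fun _ hφ => (exists_memSC0_comp_sub_iff.1 hφ).1

/-- If `μ` has a finite first moment and is invariant under the reflection
`R_θ(x) = 2θ − x`, then for every `φ ∈ 𝒞` with `ω(φ, F) > −∞`, the symmetrization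
`φ̄(x) = (φ(x) + φ(2θ − x))/2` lies in `SC_θ` and `ω(φ, F) ≤ ω(φ̄, F)`; consequently
`sup_{φ ∈ 𝒞} ω(φ, F) = sup_{φ ∈ SC_θ} ω(φ, F)`. -/
theorem statement9 (μ : Measure ℝ) [IsProbabilityMeasure μ]
    (hint : (∫⁻ x, ENNReal.ofReal |x| ∂μ) < ⊤) (θ : ℝ)
    (hsym : Measure.map (fun x => 2 * θ - x) μ = μ) :
    (∀ φ : ℝ → EReal, memC φ → omegaF φ μ ≠ ⊥ →
        (∃ ψ : ℝ → EReal, memSC0 ψ ∧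
            (fun x => (((1 : ℝ) / 2 : ℝ) : EReal) * (φ x + φ (2 * θ - x))) =
              fun x => ψ (x - θ)) ∧
          omegaF φ μ ≤
            omegaF (fun x => (((1 : ℝ) / 2 : ℝ) : EReal) * (φ x + φ (2 * θ - x))) μ) ∧
      (⨆ φ ∈ {φ : ℝ → EReal | memC φ}, omegaF φ μ) =
        ⨆ φ ∈ {φ : ℝ → EReal | ∃ ψ, memSC0 ψ ∧ φ = fun x => ψ (x - θ)}, omegaF φ μ :=
  statement9_general μ θ hsym
end
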